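/- Let n ≥ 1, m = 2n, and let C ∈ ℂ^{2n×4n} be a normalized system of boundary conditions of rank 2n that is dissipative. For each j ∈ {0, 1, …, 2n−1} let r_j denote the number of rows of C of order j. Then r_j + r_{2n−1−j} = 2 for every j ∈ {0, 1, …, 2n−1}. -/

import Mathlib

open ComplexOrder

/-- A system of boundary conditions of order `2n` is a matrix `C ∈ ℂ^{2n×4n}`; we index
the `4n` columns by `Fin (2n) ⊕ Fin (2n)`: `Sum.inl k` is the coefficient of `y^{(k)}(0)`
and `Sum.inr k` that of `y^{(k)}(1)`.  The order of row `j` is the largest `k` with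
`(C_{j,k}, C_{j,2n+k}) ≠ (0,0)`. -/
noncomputable def rowOrder {m : ℕ} (C : Matrix (Fin m) (Fin m ⊕ Fin m) ℂ) (j : Fin m) : ℕ :=
  sSup {k : ℕ | ∃ h : k < m, C j (Sum.inl ⟨k, h⟩) ≠ 0 ∨ C j (Sum.inr ⟨k, h⟩) ≠ 0}

/-- The leading pair `(α_j, β_j) = (C_{j,k_j}, C_{j,m+k_j})` of row `j`. -/
noncomputable def leadingPair {m : ℕ} (C : Matrix (Fin m) (Fin m ⊕ Fin m) ℂ) (j : Fin m) :
    ℂ × ℂ :=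
  if h : rowOrder C j < m then
    (C j (Sum.inl ⟨rowOrder C j, h⟩), C j (Sum.inr ⟨rowOrder C j, h⟩))
  else 0

/-- The system `C` is normalized if, for every value `k`, the leading pairs of the rows
of order `k` are linearly independent in `ℂ²`. -/
def IsNormalized {m : ℕ} (C : Matrix (Fin m) (Fin m ⊕ Fin m) ℂ) : Prop :=
  ∀ k : ℕ, LinearIndependent ℂ (fun j : {j : Fin m // rowOrder C j = k} => leadingPair C j.1)

/-- The quadratic form `q_J(u) = i·(−1)^{n+1} · Σ_{p=0}^{2n−1} (−1)^{p+1} u_p·conj(u_{2n−1−p})`. -/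
noncomputable def qJ (n : ℕ) (u : Fin (2 * n) → ℂ) : ℂ :=
  Complex.I * (-1 : ℂ) ^ (n + 1) *
    ∑ p : Fin (2 * n), (-1 : ℂ) ^ ((p : ℕ) + 1) * u p * (starRingEnd ℂ) (u p.rev)

/-- The system `C` is dissipative if `q_J(v) − q_J(u) ≥ 0` for every `(u,v)` satisfying
`Σ_k C_{j,k}u_k + C_{j,2n+k}v_k = 0` for all rows `j` (dissipativity of the operator
generated by `l₀(y) = (−i)^{2n}y^{(2n)}` and these boundary conditions). -/
def IsDissipativeBC (n : ℕ) (C : Matrix (Fin (2 * n)) (Fin (2 * n) ⊕ Fin (2 * n)) ℂ) : Prop :=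
  ∀ u v : Fin (2 * n) → ℂ,
    (∀ j, ∑ k, (C j (Sum.inl k) * u k + C j (Sum.inr k) * v k) = 0) →
    0 ≤ qJ n v - qJ n u

/-!
Write `V` for the space of boundary data `(u, v)` satisfying the conditions, `B` for the
Hermitian form `q(v) - q(u)`, and `F k` for the data whose derivatives of order below `k` vanish.
Dissipativity makes `V` a nonnegative subspace for `B`, and it is a maximal one because `B` is
negative definite on a subspace of the complementary dimension `m`. For a maximal nonnegative `V`
and a neutral subspace `S`, the Cauchy–Schwarz inequality and maximality give `S ∩ V⊥ = S ∩ V`, and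
comparing the two ranks of the pairing `S × V → ℂ` yields
`dim (V ∩ S⊥) + dim S = dim (V ∩ S) + dim V`. Since `F (m - k)⊥ = F k`, this applies to
`S = F (m - k)` for `2k ≤ m`. Normalization gives `dim (V ∩ F k) = 2 (m - k) - R k`, where `R k` is
the number of rows of order at least `k`, so that `R k + k = R (m - k) + (m - k)`, and the theorem
is the difference of this identity at `j` and at `j + 1`.
-/

open Module
open scoped Matrix

section SesquilinearForm

variable {K E : Type*} [Field K] [StarRing K] [AddCommGroup E] [Module K E] [FiniteDimensional K E]
  {B : E →ₗ⋆[K] E →ₗ[K] K}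

theorem finrank_le_finrank_add_finrank_inf_orthogonalBilin (V T : Submodule K E) :
    finrank K V ≤ finrank K T + finrank K (V ⊓ T.orthogonalBilin B : Submodule K E) := by
  let b := finBasis K T
  let f : V →ₗ[K] Fin (finrank K T) → K := LinearMap.pi fun i ↦ B (b i) ∘ₗ V.subtype
  have hker : (LinearMap.ker f).map V.subtype ≤ V ⊓ T.orthogonalBilin B := by
    rintro _ ⟨v, hv, rfl⟩
    refine ⟨v.2, fun t ht ↦ ?_⟩
    have hv' (i) : B (b i) v = 0 := congrFun hv i
    have hBv : B.flip v ∘ₛₗ T.subtype = 0 := b.ext hv'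
    exact LinearMap.congr_fun hBv ⟨t, ht⟩
  calc finrank K V = finrank K (LinearMap.range f) + finrank K (LinearMap.ker f) :=
        f.finrank_range_add_finrank_ker.symm
    _ ≤ finrank K T + finrank K (V ⊓ T.orthogonalBilin B : Submodule K E) := by
        gcongr
        · simpa using (LinearMap.range f).finrank_le
        · rw [← Submodule.finrank_map_subtype_eq V]
          exact Submodule.finrank_mono hker

theorem finrank_add_finrank_inf_orthogonalBilin_le (hB : B.IsRefl) (V S : Submodule K E) :
    finrank K V + finrank K (S ⊓ V.orthogonalBilin B : Submodule K E) ≤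
      finrank K S + finrank K (V ⊓ S.orthogonalBilin B : Submodule K E) := by
  obtain ⟨T', hT'⟩ := exists_isCompl (S ⊓ V.orthogonalBilin B)
  have hsup : S ⊓ V.orthogonalBilin B ⊔ T' ⊓ S = S := by
    rw [← sup_inf_assoc_of_le T' inf_le_left, hT'.sup_eq_top, top_inf_eq]
  have hdisj : Disjoint (S ⊓ V.orthogonalBilin B) (T' ⊓ S) := hT'.disjoint.mono_right inf_le_left
  have hdim := Submodule.finrank_sup_add_finrank_inf_eq (S ⊓ V.orthogonalBilin B) (T' ⊓ S)
  rw [hsup, hdisj.eq_bot, finrank_bot, add_zero] at hdim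
  have hle : V ⊓ (T' ⊓ S).orthogonalBilin B ≤ V ⊓ S.orthogonalBilin B := by
    rintro v ⟨hv, hvT⟩
    refine ⟨hv, fun s hs ↦ ?_⟩
    rw [← hsup] at hs
    obtain ⟨r, hr, t, ht, rfl⟩ := Submodule.mem_sup.1 hs
    rw [map_add, LinearMap.add_apply, hB _ _ (hr.2 v hv), hvT t ht, add_zero]
  have := finrank_le_finrank_add_finrank_inf_orthogonalBilin (B := B) V (T' ⊓ S)
  have := Submodule.finrank_mono hle
  lia

theorem finrank_add_finrank_inf_orthogonalBilin_comm (hB : B.IsRefl) (V S : Submodule K E) :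
    finrank K V + finrank K (S ⊓ V.orthogonalBilin B : Submodule K E) =
      finrank K S + finrank K (V ⊓ S.orthogonalBilin B : Submodule K E) :=
  (finrank_add_finrank_inf_orthogonalBilin_le hB V S).antisymm
    (finrank_add_finrank_inf_orthogonalBilin_le hB S V)

end SesquilinearForm

section NonnegativeSubspace

variable {𝕜 E : Type*} [RCLike 𝕜] [AddCommGroup E] [Module 𝕜 E] {B : E →ₗ⋆[𝕜] E →ₗ[𝕜] 𝕜}
  {V S N : Submodule 𝕜 E}

theorem apply_eq_zero_of_isPosSemidef (hB : B.IsPosSemidef) {x : E} (hx : B x x = 0) (y : E) :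
    B x y = 0 := by
  let core : PreInnerProductSpace.Core 𝕜 E :=
    { inner x y := B x y
      conj_inner_symm x y := hB.isSymm.eq y x
      re_inner_nonneg x := (RCLike.nonneg_iff.1 (hB.isNonneg.nonneg x)).1
      add_left x y z := by simp
      smul_left x y r := by simp }
  have hCS : ‖B x y‖ * ‖B y x‖ ≤ RCLike.re (B x x) * RCLike.re (B y y) :=
    InnerProductSpace.Core.inner_mul_inner_self_le x y
  rw [← hB.isSymm.eq x y, RCLike.norm_conj, hx, map_zero, zero_mul] at hCS
  exact norm_eq_zero.1 (mul_self_eq_zero.1 (hCS.antisymm (mul_self_nonneg _)))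

/-- A subspace on which a sesquilinear form takes nonnegative values on the diagonal; these are the
subspaces compared by inclusion when speaking of maximal nonnegative subspaces. -/
def IsNonnegativeOn (B : E →ₗ⋆[𝕜] E →ₗ[𝕜] 𝕜) (V : Submodule 𝕜 E) : Prop :=
  ∀ x ∈ V, 0 ≤ B x x

theorem IsNonnegativeOn.apply_eq_zero (hB : B.IsSymm) (hV : IsNonnegativeOn B V) {x y : E}
    (hx : x ∈ V) (hxx : B x x = 0) (hy : y ∈ V) : B x y = 0 :=
  apply_eq_zero_of_isPosSemidef (B := B.domRestrict₁₂ V V) (x := ⟨x, hx⟩)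
    { eq := (hB.domRestrict V).eq, isNonneg := ⟨fun v ↦ hV v v.2⟩ } hxx ⟨y, hy⟩

theorem IsNonnegativeOn.sup_of_le_orthogonalBilin (hB : B.IsSymm) (hV : IsNonnegativeOn B V)
    (hS : IsNonnegativeOn B S) (hSV : S ≤ V.orthogonalBilin B) : IsNonnegativeOn B (V ⊔ S) := by
  intro x hx
  obtain ⟨v, hv, s, hs, rfl⟩ := Submodule.mem_sup.1 hx
  have hvs : B v s = 0 := hSV hs v hv
  have hsv : B s v = 0 := hB.isRefl v s hvs
  simpa [hvs, hsv] using add_nonneg (hV v hv) (hS s hs)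

theorem maximal_isNonnegativeOn_of_finrank_le [FiniteDimensional 𝕜 E] (hV : IsNonnegativeOn B V)
    (hN : ∀ x ∈ N, x ≠ 0 → B x x < 0) (hdim : finrank 𝕜 E ≤ finrank 𝕜 V + finrank 𝕜 N) :
    Maximal (IsNonnegativeOn B) V := by
  refine ⟨hV, fun W hW hVW ↦ (Submodule.eq_of_le_of_finrank_le hVW ?_).ge⟩
  have hWN : Disjoint W N := Submodule.disjoint_def.2 fun x hxW hxN ↦ by
    by_contra hx
    exact (hW x hxW).not_gt (hN x hxN hx)
  have := Submodule.finrank_add_finrank_le_of_disjoint hWN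
  lia

theorem inf_orthogonalBilin_eq_inf_of_maximal (hB : B.IsSymm)
    (hV : Maximal (IsNonnegativeOn B) V) (hS : ∀ x ∈ S, B x x = 0) :
    S ⊓ V.orthogonalBilin B = S ⊓ V := by
  refine le_antisymm (le_inf inf_le_left ?_) (le_inf inf_le_left ?_)
  · exact le_sup_right.trans <| hV.le_of_ge
      (hV.prop.sup_of_le_orthogonalBilin hB (fun x hx ↦ (hS x hx.1).ge) inf_le_right) le_sup_left
  · rintro x ⟨hxS, hxV⟩ v hv
    exact hB.isRefl x v (hV.prop.apply_eq_zero hB hxV (hS x hxS) hv)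

theorem finrank_inf_orthogonalBilin_of_maximal [FiniteDimensional 𝕜 E] (hB : B.IsSymm)
    (hV : Maximal (IsNonnegativeOn B) V) (hS : ∀ x ∈ S, B x x = 0) :
    finrank 𝕜 (V ⊓ S.orthogonalBilin B : Submodule 𝕜 E) + finrank 𝕜 S =
      finrank 𝕜 (V ⊓ S : Submodule 𝕜 E) + finrank 𝕜 V := by
  have h := finrank_add_finrank_inf_orthogonalBilin_comm hB.isRefl V S
  rw [inf_orthogonalBilin_eq_inf_of_maximal hB hV hS, inf_comm S V] at h
  lia

end NonnegativeSubspace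

section CoordinateSubspace

variable {R K ι κ α : Type*}

theorem mulVec_extend_zero [NonUnitalNonAssocSemiring R] [Fintype α] [Fintype ι]
    (M : Matrix κ ι R) {e : α → ι} (he : Function.Injective e) (y : α → R) :
    M *ᵥ Function.extend e y 0 = M.submatrix id e *ᵥ y := by
  ext j
  refine (Fintype.sum_of_injective e he _ _ (fun i hi ↦ ?_) fun a ↦ ?_).symm
  · rw [Function.extend_apply' _ _ _ hi, Pi.zero_apply, mul_zero]
  · exact congrArg (M j (e a) * ·) (he.extend_apply y 0 a).symm

theorem range_extendByZero_compl [Semiring R] (s : Set ι) :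
    LinearMap.range (Function.ExtendByZero.linearMap R ((↑) : ↥sᶜ → ι)) =
      Submodule.pi s fun _ ↦ ⊥ := by
  have hzero (y : ↥sᶜ → R) {i : ι} (hi : i ∈ s) :
      Function.extend ((↑) : ↥sᶜ → ι) y 0 i = 0 :=
    Function.extend_apply' _ _ _ (by rintro ⟨j, rfl⟩; exact j.2 hi)
  ext x
  constructor
  · rintro ⟨y, rfl⟩ i hi
    exact hzero y hi
  · intro hx
    refine ⟨fun i ↦ x i, funext fun i ↦ ?_⟩
    by_cases hi : i ∈ s
    · exact (hzero (fun i ↦ x i) hi).trans (hx i hi).symm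
    · exact Subtype.val_injective.extend_apply (fun i : ↥sᶜ ↦ x i) 0 ⟨i, hi⟩

theorem finrank_pi_bot [Ring R] [StrongRankCondition R] (s : Set ι) [Fintype ↥sᶜ] :
    finrank R (Submodule.pi s fun _ ↦ ⊥ : Submodule R (ι → R)) = Fintype.card ↥sᶜ := by
  rw [← range_extendByZero_compl, LinearMap.finrank_range_of_inj
    (Function.extend_injective Subtype.val_injective (0 : ι → R)), finrank_fintype_fun_eq_card]

theorem finrank_ker_mulVecLin_inf_pi_bot [Field K] [Fintype ι] (M : Matrix κ ι K)
    (s : Set ι) [Fintype ↥sᶜ] :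
    finrank K (LinearMap.ker M.mulVecLin ⊓ Submodule.pi s fun _ ↦ ⊥ : Submodule K (ι → K)) +
      (M.submatrix id ((↑) : ↥sᶜ → ι)).rank = Fintype.card ↥sᶜ := by
  let extend := Function.ExtendByZero.linearMap K ((↑) : ↥sᶜ → ι)
  have hinj : Function.Injective extend :=
    Function.extend_injective Subtype.val_injective (0 : ι → K)
  have hcomp : M.mulVecLin ∘ₗ extend = (M.submatrix id ((↑) : ↥sᶜ → ι)).mulVecLin :=
    LinearMap.ext fun y ↦ mulVec_extend_zero M Subtype.val_injective y
  rw [← range_extendByZero_compl, inf_comm, ← Submodule.map_comap_eq, ← LinearMap.ker_comp, hcomp,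
    ← (Submodule.equivMapOfInjective extend hinj _).finrank_eq, add_comm, Matrix.rank,
    LinearMap.finrank_range_add_finrank_ker, finrank_fintype_fun_eq_card]

end CoordinateSubspace

section ReflectionForm

variable {R 𝕜 ι : Type*} [Fintype ι] {σ : Equiv.Perm ι}

section CommSemiring

variable [CommSemiring R] [StarRing R] {c : ι → R}

/-- The sesquilinear form `∑ i, c i * conj (x (σ i)) * y i`, pairing each coordinate with its image
under the permutation `σ`. It models the Lagrange form of a differential expression, where `σ`
pairs the derivatives of orders `p` and `m - 1 - p`. -/
def reflectionForm (σ : Equiv.Perm ι) (c : ι → R) : (ι → R) →ₗ⋆[R] (ι → R) →ₗ[R] R :=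
  LinearMap.mk₂'ₛₗ (starRingEnd R) (RingHom.id R)
    (fun x y ↦ ∑ i, c i * starRingEnd R (x (σ i)) * y i)
    (fun x x' y ↦ by simp [mul_add, add_mul, Finset.sum_add_distrib])
    (fun a x y ↦ by simp [Finset.mul_sum, mul_assoc, mul_left_comm])
    (fun x y y' ↦ by simp [mul_add, Finset.sum_add_distrib])
    (fun a x y ↦ by simp [Finset.mul_sum, mul_left_comm])

theorem reflectionForm_apply (σ : Equiv.Perm ι) (c x y : ι → R) :
    reflectionForm σ c x y = ∑ i, c i * starRingEnd R (x (σ i)) * y i :=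
  rfl

theorem isSymm_reflectionForm (hσ : Function.Involutive σ)
    (hc : ∀ i, starRingEnd R (c (σ i)) = c i) : (reflectionForm σ c).IsSymm where
  eq x y := by
    rw [reflectionForm_apply, reflectionForm_apply, map_sum, ← Equiv.sum_comp σ]
    refine Finset.sum_congr rfl fun i _ ↦ ?_
    simp only [map_mul, hc, hσ i, starRingEnd_self_apply]
    ring

theorem orthogonalBilin_reflectionForm_pi_bot [NoZeroDivisors R] (hc : ∀ i, c i ≠ 0) (s : Set ι) :
    (Submodule.pi s fun _ ↦ ⊥).orthogonalBilin (reflectionForm σ c) =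
      Submodule.pi {i | σ i ∉ s} fun _ ↦ ⊥ := by
  classical
  ext y
  constructor
  · intro hy i hi
    have hx : Pi.single (σ i) 1 ∈ Submodule.pi s fun _ ↦ (⊥ : Submodule R R) := fun j hj ↦
      Pi.single_eq_of_ne (by rintro rfl; exact hi hj) 1
    have hyi := hy _ hx
    rw [reflectionForm_apply, Finset.sum_eq_single i] at hyi
    · rw [Pi.single_eq_same, map_one, mul_one] at hyi
      exact (mul_eq_zero.1 hyi).resolve_left (hc i)
    · intro j _ hj
      simp [σ.injective.ne hj]
    · simp
  · intro hy x hx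
    refine Finset.sum_eq_zero fun i _ ↦ ?_
    by_cases hi : σ i ∈ s
    · have hxi : x (σ i) = 0 := hx _ hi
      simp [hxi]
    · have hyi : y i = 0 := hy i hi
      simp [hyi]

end CommSemiring

theorem reflectionForm_sumCongr [CommRing R] [StarRing R] (σ : Equiv.Perm ι) (c : ι → R)
    (x y : ι ⊕ ι → R) :
    reflectionForm (σ.sumCongr σ) (Sum.elim (-c) c) x y =
      reflectionForm σ c (x ∘ Sum.inr) (y ∘ Sum.inr) -
        reflectionForm σ c (x ∘ Sum.inl) (y ∘ Sum.inl) := by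
  simp only [reflectionForm_apply, Equiv.sumCongr_apply, Fintype.sum_sum_type, Sum.elim_inl,
    Pi.neg_apply, Sum.map_inl, neg_mul, Finset.sum_neg_distrib, Sum.elim_inr, Sum.map_inr,
    Function.comp_apply]
  ring

variable [RCLike 𝕜] {c : ι → 𝕜}

theorem reflectionForm_mul_comp_self (hσ : Function.Involutive σ) (c w : ι → 𝕜) :
    reflectionForm σ c ((c * w) ∘ σ) w = (∑ i, ‖c i * w i‖ ^ 2 : ℝ) := by
  rw [reflectionForm_apply, RCLike.ofReal_sum]
  refine Finset.sum_congr rfl fun i _ ↦ ?_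
  rw [Function.comp_apply, hσ i, Pi.mul_apply, RCLike.ofReal_pow, ← RCLike.conj_mul]
  ring

theorem reflectionForm_sumCongr_apply_self_neg (hσ : Function.Involutive σ)
    (hc : ∀ i, starRingEnd 𝕜 (c (σ i)) = c i) (hc0 : ∀ i, c i ≠ 0) {w : ι → 𝕜} (hw : w ≠ 0) :
    letI x := Sum.elim (w + (c * w) ∘ σ) (w - (c * w) ∘ σ)
    reflectionForm (σ.sumCongr σ) (Sum.elim (-c) c) x x < 0 := by
  have hform := reflectionForm_mul_comp_self hσ c w
  have hform' := (isSymm_reflectionForm hσ hc).eq ((c * w) ∘ σ) w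
  rw [hform, RCLike.conj_ofReal] at hform'
  obtain ⟨i, hi⟩ := Function.ne_iff.1 hw
  have hpos : 0 < ∑ i, ‖c i * w i‖ ^ 2 := Finset.sum_pos' (fun _ _ ↦ by positivity)
    ⟨i, Finset.mem_univ i, by have := mul_ne_zero (hc0 i) hi; positivity⟩
  rw [reflectionForm_sumCongr, Sum.elim_comp_inl, Sum.elim_comp_inr]
  calc _ = (((-4) * ∑ i, ‖c i * w i‖ ^ 2 : ℝ) : 𝕜) := by
        simp only [map_add, map_sub, LinearMap.add_apply, LinearMap.sub_apply, hform, ← hform']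
        push_cast
        ring
    _ < 0 := by
        rw [← RCLike.ofReal_zero, RCLike.ofReal_lt_ofReal]
        linarith

theorem exists_submodule_reflectionForm_sumCongr_neg (hσ : Function.Involutive σ)
    (hc : ∀ i, starRingEnd 𝕜 (c (σ i)) = c i) (hc0 : ∀ i, c i ≠ 0) :
    ∃ N : Submodule 𝕜 (ι ⊕ ι → 𝕜), finrank 𝕜 N = Fintype.card ι ∧
      ∀ x ∈ N, x ≠ 0 → reflectionForm (σ.sumCongr σ) (Sum.elim (-c) c) x x < 0 := by
  let f : (ι → 𝕜) →ₗ[𝕜] ι ⊕ ι → 𝕜 :=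
    { toFun w := Sum.elim (w + (c * w) ∘ σ) (w - (c * w) ∘ σ)
      map_add' w w' := by
        rw [mul_add, Pi.add_comp, add_add_add_comm, add_sub_add_comm, Sum.elim_add_add]
      map_smul' a w := by
        rw [mul_smul_comm, Pi.smul_comp, ← smul_add, ← smul_sub]
        ext (_ | _) <;> rfl }
  have hneg {w : ι → 𝕜} (hw : w ≠ 0) :
      reflectionForm (σ.sumCongr σ) (Sum.elim (-c) c) (f w) (f w) < 0 :=
    reflectionForm_sumCongr_apply_self_neg hσ hc hc0 hw
  have hinj : Function.Injective f := (injective_iff_map_eq_zero f).2 fun w hfw ↦ by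
    by_contra hw
    simpa [hfw] using hneg hw
  refine ⟨LinearMap.range f, ?_, ?_⟩
  · rw [LinearMap.finrank_range_of_inj hinj, finrank_fintype_fun_eq_card]
  · rintro _ ⟨w, rfl⟩ hw
    exact hneg (by rintro rfl; exact hw (map_zero f))

end ReflectionForm

section BoundaryConditions

variable {m k : ℕ} {C : Matrix (Fin m) (Fin m ⊕ Fin m) ℂ} {j : Fin m} {i : Fin m ⊕ Fin m}

/-- The order of the derivative whose boundary value is the coordinate `i` of the boundary data
`(u, v)`, at either endpoint. -/
def derivOrder : Fin m ⊕ Fin m → ℕ :=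
  Sum.elim Fin.val Fin.val

theorem derivOrder_lt (i : Fin m ⊕ Fin m) : derivOrder i < m := by
  obtain i | i := i <;> exact i.2

theorem derivOrder_revPerm_sumCongr (i : Fin m ⊕ Fin m) :
    derivOrder (Fin.revPerm.sumCongr Fin.revPerm i) = m - 1 - derivOrder i := by
  obtain i | i := i <;>
    simp only [derivOrder, Equiv.sumCongr_apply, Sum.map_inl, Sum.map_inr, Fin.revPerm_apply,
      Sum.elim_inl, Sum.elim_inr, Fin.val_rev] <;> lia

theorem card_setOf_derivOrder_lt_compl [Fintype ↥{i : Fin m ⊕ Fin m | derivOrder i < k}ᶜ] :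
    Fintype.card ↥{i : Fin m ⊕ Fin m | derivOrder i < k}ᶜ = 2 * (m - k) := by
  have h : Finset.card {i : Fin m ⊕ Fin m | derivOrder i < k} = 2 * min m k := by
    rw [Finset.card_filter, Fintype.sum_sum_type, two_mul, ← Fin.card_filter_val_lt,
      Finset.card_filter]
    rfl
  rw [Fintype.card_compl_set, Fintype.card_sum, Fintype.card_fin, ← Set.toFinset_card,
    Set.toFinset_ofPred, h]
  lia

theorem rowOrder_lt (C : Matrix (Fin m) (Fin m ⊕ Fin m) ℂ) (j : Fin m) : rowOrder C j < m := by
  have hle : rowOrder C j ≤ m - 1 := csSup_le' fun k ⟨hk, _⟩ ↦ Nat.le_sub_one_of_lt hk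
  have := j.pos
  lia

theorem apply_eq_zero_of_rowOrder_lt (h : rowOrder C j < derivOrder i) : C j i = 0 := by
  by_contra hji
  refine h.not_ge (le_csSup ⟨m, fun _ ⟨hk, _⟩ ↦ hk.le⟩ ⟨derivOrder_lt i, ?_⟩)
  obtain i | i := i
  · exact Or.inl hji
  · exact Or.inr hji

theorem leadingPair_eq (h : rowOrder C j = k) (hk : k < m) :
    leadingPair C j = (C j (Sum.inl ⟨k, hk⟩), C j (Sum.inr ⟨k, hk⟩)) := by
  subst h
  exact dif_pos hk

-- In the columns of the highest order among the rows with `a j ≠ 0`, only the leading pairs of the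
-- rows of that order contribute to `a ᵥ* C`.
theorem IsNormalized.eq_zero_of_vecMul_eq_zero (hC : IsNormalized C) {a : Fin m → ℂ}
    (ha : ∀ i, k ≤ derivOrder i → (a ᵥ* C) i = 0) (hj : k ≤ rowOrder C j) : a j = 0 := by
  by_contra haj
  obtain ⟨j₀, hj₀, hmax⟩ := Finset.exists_max_image {j | a j ≠ 0} (rowOrder C) ⟨j, by simpa⟩
  simp only [Finset.mem_filter, Finset.mem_univ, true_and] at hj₀ hmax
  set l := rowOrder C j₀
  have hl : l < m := rowOrder_lt C j₀
  have hsum {i : Fin m ⊕ Fin m} (hi : derivOrder i = l) :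
      ∑ j : {j // rowOrder C j = l}, a j * C j i = 0 := by
    rw [← ha i (hi ▸ hj.trans (hmax j haj))]
    refine Fintype.sum_of_injective _ Subtype.val_injective _ _ (fun j hj ↦ ?_) fun _ ↦ rfl
    have hjl : rowOrder C j ≠ l := fun h ↦ hj ⟨⟨j, h⟩, rfl⟩
    by_cases haj : a j = 0
    · exact mul_eq_zero_of_left haj _
    · exact mul_eq_zero_of_right _
        (apply_eq_zero_of_rowOrder_lt (hi ▸ (hmax j haj).lt_of_ne hjl))
  refine hj₀ (Fintype.linearIndependent_iff.1 (hC l) (fun j ↦ a j) ?_ ⟨j₀, rfl⟩)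
  have hpair : ∀ j : {j // rowOrder C j = l},
      leadingPair C j = (C j (Sum.inl ⟨l, hl⟩), C j (Sum.inr ⟨l, hl⟩)) :=
    fun j ↦ leadingPair_eq j.2 hl
  simp only [hpair, Prod.smul_mk, smul_eq_mul, ← prod_mk_sum, Prod.mk_eq_zero]
  exact ⟨hsum rfl, hsum rfl⟩

theorem IsNormalized.rank_submatrix (hC : IsNormalized C) (k : ℕ) :
    (C.submatrix id ((↑) : ↥{i : Fin m ⊕ Fin m | derivOrder i < k}ᶜ → Fin m ⊕ Fin m)).rank =
      Finset.card {j | k ≤ rowOrder C j} := by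
  set D := C.submatrix id ((↑) : ↥{i : Fin m ⊕ Fin m | derivOrder i < k}ᶜ → Fin m ⊕ Fin m)
  have hker : LinearMap.ker Dᵀ.mulVecLin = Submodule.pi {j | k ≤ rowOrder C j} fun _ ↦ ⊥ := by
    ext a
    have hmem : a ∈ LinearMap.ker Dᵀ.mulVecLin ↔ ∀ i, k ≤ derivOrder i → (a ᵥ* C) i = 0 := by
      rw [LinearMap.mem_ker, Matrix.mulVecLin_apply, Matrix.mulVec_transpose, funext_iff,
        Subtype.forall]
      simp only [Set.mem_compl_iff, Set.mem_ofPred_eq, not_lt]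
      rfl
    rw [hmem]
    refine ⟨fun ha j hj ↦ hC.eq_zero_of_vecMul_eq_zero ha hj, fun ha i hi ↦ ?_⟩
    refine Finset.sum_eq_zero (s := Finset.univ) (f := fun j ↦ a j * C j i) fun j _ ↦ ?_
    obtain hj | hj := le_or_gt k (rowOrder C j)
    · exact mul_eq_zero_of_left (ha j hj) _
    · exact mul_eq_zero_of_right _ (apply_eq_zero_of_rowOrder_lt (hj.trans_le hi))
  have hrank := LinearMap.finrank_range_add_finrank_ker Dᵀ.mulVecLin
  rw [← Matrix.rank, Matrix.rank_transpose, hker, finrank_pi_bot, Fintype.card_compl_set,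
    finrank_fintype_fun_eq_card, ← Set.toFinset_card, Set.toFinset_ofPred] at hrank
  have := Finset.card_le_univ {j | k ≤ rowOrder C j}
  lia

/-- The boundary data all of whose derivatives of order below `k` vanish at both endpoints. -/
def flatBoundaryData (m k : ℕ) : Submodule ℂ (Fin m ⊕ Fin m → ℂ) :=
  Submodule.pi {i | derivOrder i < k} fun _ ↦ ⊥

theorem finrank_flatBoundaryData : finrank ℂ (flatBoundaryData m k) = 2 * (m - k) := by
  rw [flatBoundaryData, finrank_pi_bot, card_setOf_derivOrder_lt_compl]

theorem flatBoundaryData_anti : Antitone (flatBoundaryData m) :=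
  fun _ _ hkl _ hx i hi ↦ hx i (lt_of_lt_of_le hi hkl)

theorem IsNormalized.finrank_ker_inf_flatBoundaryData (hC : IsNormalized C) (k : ℕ) :
    finrank ℂ (LinearMap.ker C.mulVecLin ⊓ flatBoundaryData m k : Submodule ℂ _) +
      Finset.card {j | k ≤ rowOrder C j} = 2 * (m - k) := by
  rw [← hC.rank_submatrix, ← card_setOf_derivOrder_lt_compl]
  exact finrank_ker_mulVecLin_inf_pi_bot C _

theorem IsNormalized.finrank_ker (hC : IsNormalized C) :
    finrank ℂ (LinearMap.ker C.mulVecLin) = m := by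
  have hflat : flatBoundaryData m 0 = ⊤ := by simp [flatBoundaryData]
  have h := hC.finrank_ker_inf_flatBoundaryData 0
  rw [hflat, inf_top_eq] at h
  simp only [zero_le, Finset.filter_true, Finset.card_univ, Fintype.card_fin, tsub_zero] at h
  lia

variable {c : Fin m → ℂ}

/-- The Hermitian form `(u, v) ↦ q(v) - q(u)` on boundary data, where `q` is the Hermitian form on
`ℂ^m` which pairs the coordinates `p` and `m - 1 - p` with weight `c p`. -/
noncomputable def boundaryForm (c : Fin m → ℂ) :
    (Fin m ⊕ Fin m → ℂ) →ₗ⋆[ℂ] (Fin m ⊕ Fin m → ℂ) →ₗ[ℂ] ℂ :=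
  reflectionForm (Fin.revPerm.sumCongr Fin.revPerm) (Sum.elim (-c) c)

theorem isSymm_boundaryForm (hc : ∀ p, starRingEnd ℂ (c p.rev) = c p) :
    (boundaryForm c).IsSymm :=
  isSymm_reflectionForm (by rintro (p | p) <;> simp) (by rintro (p | p) <;> simp [hc])

theorem orthogonalBilin_boundaryForm_flatBoundaryData (hc0 : ∀ p, c p ≠ 0) (hk : k ≤ m) :
    (flatBoundaryData m k).orthogonalBilin (boundaryForm c) = flatBoundaryData m (m - k) := by
  refine (orthogonalBilin_reflectionForm_pi_bot (by rintro (p | p) <;> simp [hc0]) _).trans ?_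
  rw [flatBoundaryData]
  congr 1
  ext i
  have := derivOrder_lt i
  simp only [Set.mem_ofPred_eq, derivOrder_revPerm_sumCongr]
  lia

theorem IsNormalized.maximal_isNonnegativeOn_ker (hc0 : ∀ p, c p ≠ 0)
    (hc : ∀ p, starRingEnd ℂ (c p.rev) = c p) (hC : IsNormalized C)
    (hpos : IsNonnegativeOn (boundaryForm c) (LinearMap.ker C.mulVecLin)) :
    Maximal (IsNonnegativeOn (boundaryForm c)) (LinearMap.ker C.mulVecLin) := by
  obtain ⟨N, hN, hneg⟩ :=
    exists_submodule_reflectionForm_sumCongr_neg (σ := Fin.revPerm) Fin.rev_rev hc hc0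
  refine maximal_isNonnegativeOn_of_finrank_le hpos hneg ?_
  rw [hN, hC.finrank_ker, finrank_fintype_fun_eq_card, Fintype.card_sum, Fintype.card_fin]

theorem IsNormalized.card_le_rowOrder_add_of_add_eq (hc0 : ∀ p, c p ≠ 0)
    (hc : ∀ p, starRingEnd ℂ (c p.rev) = c p) (hC : IsNormalized C)
    (hpos : IsNonnegativeOn (boundaryForm c) (LinearMap.ker C.mulVecLin)) {k l : ℕ}
    (hkl : k + l = m) :
    Finset.card {j | k ≤ rowOrder C j} + k = Finset.card {j | l ≤ rowOrder C j} + l := by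
  wlog hle : k ≤ l generalizing k l
  · exact (this (by lia) (by lia)).symm
  have horth : (flatBoundaryData m l).orthogonalBilin (boundaryForm c) = flatBoundaryData m k := by
    rw [orthogonalBilin_boundaryForm_flatBoundaryData hc0 (by lia), ← hkl, Nat.add_sub_cancel_right]
  have hneutral : ∀ x ∈ flatBoundaryData m l, boundaryForm c x x = 0 := fun x hx ↦ by
    have hx' : x ∈ (flatBoundaryData m l).orthogonalBilin (boundaryForm c) :=
      horth ▸ flatBoundaryData_anti hle hx
    exact hx' x hx
  have h := finrank_inf_orthogonalBilin_of_maximal (isSymm_boundaryForm hc)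
    (hC.maximal_isNonnegativeOn_ker hc0 hc hpos) hneutral
  rw [horth, finrank_flatBoundaryData, hC.finrank_ker] at h
  have := hC.finrank_ker_inf_flatBoundaryData k
  have := hC.finrank_ker_inf_flatBoundaryData l
  lia

theorem card_rowOrder_eq_add (C : Matrix (Fin m) (Fin m ⊕ Fin m) ℂ) (k : ℕ) :
    Finset.card {j | rowOrder C j = k} + Finset.card {j | k + 1 ≤ rowOrder C j} =
      Finset.card {j | k ≤ rowOrder C j} := by
  rw [← Finset.card_union_of_disjoint (Finset.disjoint_filter.2 fun _ _ ↦ by lia),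
    ← Finset.filter_or]
  congr! 3
  lia

theorem stmt15_general (hc0 : ∀ p, c p ≠ 0) (hc : ∀ p, starRingEnd ℂ (c p.rev) = c p)
    (hC : IsNormalized C)
    (hpos : IsNonnegativeOn (boundaryForm c) (LinearMap.ker C.mulVecLin)) {j : ℕ} (hj : j < m) :
    Finset.card {row | rowOrder C row = j} + Finset.card {row | rowOrder C row = m - 1 - j} =
      2 := by
  have := hC.card_le_rowOrder_add_of_add_eq hc0 hc hpos (k := j) (l := m - 1 - j + 1) (by lia)
  have := hC.card_le_rowOrder_add_of_add_eq hc0 hc hpos (k := j + 1) (l := m - 1 - j) (by lia)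
  have := card_rowOrder_eq_add C j
  have := card_rowOrder_eq_add C (m - 1 - j)
  lia

end BoundaryConditions

section Dissipative

variable {n : ℕ}

/-- The weights `i (-1) ^ (n + 1) (-1) ^ (p + 1)` of the products of coordinates in `qJ n`. -/
noncomputable def lagrangeWeight (n : ℕ) (p : Fin (2 * n)) : ℂ :=
  Complex.I * (-1) ^ (n + 1) * (-1) ^ ((p : ℕ) + 1)

theorem lagrangeWeight_ne_zero (p : Fin (2 * n)) : lagrangeWeight n p ≠ 0 := by
  simp [lagrangeWeight]

theorem conj_lagrangeWeight_rev (p : Fin (2 * n)) :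
    starRingEnd ℂ (lagrangeWeight n p.rev) = lagrangeWeight n p := by
  have hparity : (-1 : ℂ) ^ ((p.rev : ℕ) + 1) = -(-1) ^ ((p : ℕ) + 1) := by
    calc (-1 : ℂ) ^ ((p.rev : ℕ) + 1) = (-1) ^ ((p.rev : ℕ) + 1 + 2 * (p + 1)) := by
          simp [pow_add, pow_mul]
      _ = (-1) ^ (2 * n + (p + 1) + 1) := by
          rw [Fin.val_rev]
          congr 1
          lia
      _ = -(-1) ^ ((p : ℕ) + 1) := by simp [pow_add, pow_mul]
  rw [lagrangeWeight, hparity, lagrangeWeight]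
  simp

theorem qJ_eq_reflectionForm (n : ℕ) (u : Fin (2 * n) → ℂ) :
    qJ n u = reflectionForm Fin.revPerm (lagrangeWeight n) u u := by
  rw [qJ, reflectionForm_apply, Finset.mul_sum]
  refine Finset.sum_congr rfl fun p _ ↦ ?_
  rw [lagrangeWeight, Fin.revPerm_apply]
  ring

theorem IsDissipativeBC.isNonnegativeOn {C : Matrix (Fin (2 * n)) (Fin (2 * n) ⊕ Fin (2 * n)) ℂ}
    (hC : IsDissipativeBC n C) :
    IsNonnegativeOn (boundaryForm (lagrangeWeight n)) (LinearMap.ker C.mulVecLin) := by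
  intro x hx
  rw [boundaryForm, reflectionForm_sumCongr, ← qJ_eq_reflectionForm, ← qJ_eq_reflectionForm]
  refine hC _ _ fun j ↦ ?_
  rw [Finset.sum_add_distrib]
  exact (Fintype.sum_sum_type fun i ↦ C j i * x i).symm.trans (congrFun hx j)

end Dissipative

/-- for a normalized dissipative rank-`2n` system, the numbers `r_j` of
rows of order `j` satisfy `r_j + r_{2n−1−j} = 2` for every `j < 2n`. -/
theorem stmt15 (n : ℕ) (hn : 1 ≤ n)
    (C : Matrix (Fin (2 * n)) (Fin (2 * n) ⊕ Fin (2 * n)) ℂ)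
    (hrank : C.rank = 2 * n) (hnorm : IsNormalized C) (hdiss : IsDissipativeBC n C) :
    ∀ j : ℕ, j < 2 * n →
      (Finset.univ.filter fun row : Fin (2 * n) => rowOrder C row = j).card
        + (Finset.univ.filter fun row : Fin (2 * n) => rowOrder C row = 2 * n - 1 - j).card
        = 2 :=
  fun _ hj ↦ stmt15_general lagrangeWeight_ne_zero conj_lagrangeWeight_rev hnorm
    hdiss.isNonnegativeOn hj
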